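/- arXiv:math-ph/0008007 — 4 statements merged into one kernel-verified Lean document; each statement's English description precedes it below -/
import Mathlib

section
/- For every sequence c : ℕ → ℂ with c 0 = 1, the linear map Φ_c : ℂ[x,p] → End_ℂ(V) defined on the monomial basis by Φ_c(p^m x^n) = Σ_{s=0}^{min(m,n)} (−1)^s · (m!·n!/(s!·(m−s)!·(n−s)!)) · c_s · ħ^s · F^{(m−s,n−s)} satisfies, for every polynomial A ∈ ℂ[x,p], the modified Dirac quantization rules: a† ∘ Φ_c(A) − Φ_c(A) ∘ a† = iħ · Φ_c(∂_p A) and (−iħ·a) ∘ Φ_c(A) − Φ_c(A) ∘ (−iħ·a) = −iħ · Φ_c(∂_x A). (Here {x,A}_P = ∂_p A and {p,A}_P = −∂_x A are the Poisson brackets with the coordinate functions.) -/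
open Complex MvPolynomial Finset

noncomputable section

/-- The standard basis vector `e n` of `V = ℕ →₀ ℂ`. -/
def e (n : ℕ) : ℕ →₀ ℂ := Finsupp.single n 1

/-- The destruction operator `a`: `a (e 0) = 0`, `a (e (n+1)) = √(n+1) • e n`. -/
def aop : (ℕ →₀ ℂ) →ₗ[ℂ] (ℕ →₀ ℂ) :=
  Finsupp.lsum ℂ fun n => match n with
    | 0 => 0
    | k + 1 => ((Real.sqrt (k + 1) : ℝ) : ℂ) • Finsupp.lsingle k

/-- The creation operator `a†`: `a† (e n) = √(n+1) • e (n+1)`. -/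
def adop : (ℕ →₀ ℂ) →ₗ[ℂ] (ℕ →₀ ℂ) :=
  Finsupp.lsum ℂ fun n => ((Real.sqrt (n + 1) : ℝ) : ℂ) • Finsupp.lsingle (n + 1)

/-- `F^{(m,n)} = (−iℏ·a)^m ∘ (a†)^n` as an element of `End_ℂ(V)`. -/
def F (ℏ : ℝ) (m n : ℕ) : Module.End ℂ (ℕ →₀ ℂ) :=
  ((-(Complex.I * ℏ)) • (aop : Module.End ℂ (ℕ →₀ ℂ))) ^ m * (adop : Module.End ℂ (ℕ →₀ ℂ)) ^ n

/-- The polynomial algebra ℂ[x,p] in two commuting variables. -/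
abbrev Pxp := MvPolynomial (Fin 2) ℂ

/-- The variable `x`. -/
def xv : Pxp := X 0
/-- The variable `p`. -/
def pv : Pxp := X 1

/-- The partial derivative `∂_x` as a linear endomorphism. -/
def Dx : Module.End ℂ Pxp := (pderiv (0 : Fin 2)).toLinearMap
/-- The partial derivative `∂_p` as a linear endomorphism. -/
def Dp : Module.End ℂ Pxp := (pderiv (1 : Fin 2)).toLinearMap

/-!
Let `N` be normal ordering, the linear map sending the commutative monomial `p ^ m * x ^ n` to the
operator product `p ^ m * x ^ n`. The canonical commutation relation alone gives
`⁅x, N A⁆ = z • N (∂_p A)` and `⁅p, N A⁆ = -z • N (∂_x A)`. The coefficients of `Φ_c` are those of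
`Φ_c A = ∑ s, (w s / s!) • N ((∂_x ∂_p) ^ s A)` with `w s = (-1) ^ s * c s * ℏ ^ s`, and
`∂_x ∂_p` commutes with both partial derivatives, so `Φ_c` inherits the two rules from `N`.
-/

section Commutator

attribute [local instance] LieRing.ofAssociativeRing

-- `lie_smul` itself does not unify with a ring commutator in `rw` or `simp`.
lemma ring_lie_smul {K R : Type*} [CommRing K] [Ring R] [Algebra K R] (a : R) (z : K) (b : R) :
    ⁅a, z • b⁆ = z • ⁅a, b⁆ :=
  lie_smul z a b

lemma ring_lie_mul {R : Type*} [Ring R] (a b c : R) :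
    ⁅a, b * c⁆ = ⁅a, b⁆ * c + b * ⁅a, c⁆ := by
  simp only [Ring.lie_def]
  noncomm_ring

lemma lie_pow_of_commute {R : Type*} [Ring R] {a b : R} (h : Commute ⁅a, b⁆ b) (n : ℕ) :
    ⁅a, b ^ n⁆ = n • (b ^ (n - 1) * ⁅a, b⁆) := by
  induction n with
  | zero => simp [Ring.lie_def]
  | succ n ih =>
    rcases n with _ | n
    · simp
    · rw [pow_succ, ring_lie_mul, ih, smul_mul_assoc, mul_assoc, h.eq, ← mul_assoc,
        Nat.add_sub_cancel, Nat.add_sub_cancel, ← pow_succ, ← succ_nsmul]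

lemma lie_pow_of_lie_eq_smul_one {K R : Type*} [CommRing K] [Ring R] [Algebra K R] {a b : R}
    {z : K} (h : ⁅a, b⁆ = z • (1 : R)) (n : ℕ) : ⁅a, b ^ n⁆ = (z * n) • b ^ (n - 1) := by
  have hcomm : Commute ⁅a, b⁆ b := h ▸ (Commute.one_left b).smul_left z
  rw [lie_pow_of_commute hcomm, h, mul_smul_comm, mul_one, mul_comm, mul_smul,
    Nat.cast_smul_eq_nsmul]

lemma lie_neg_smul_of_lie_eq_neg_one {K R : Type*} [CommRing K] [Ring R] [Algebra K R] {a b : R}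
    (h : ⁅a, b⁆ = -1) (z : K) : ⁅a, -z • b⁆ = z • (1 : R) := by
  rw [ring_lie_smul, h, smul_neg, neg_smul, neg_neg]

lemma lie_apply_of_eventually_eq_sum {K P R : Type*} [CommRing K] [AddCommMonoid P] [Module K P]
    [Ring R] [Algebra K R] {D Δ : Module.End K P} (hcomm : Commute D Δ) {N Φ : P →ₗ[K] R}
    {a : R} {z : K} (hN : ∀ A, ⁅a, N A⁆ = z • N (D A)) {v : ℕ → K}
    (hΦ : ∀ A, ∀ᶠ M in Filter.atTop, Φ A = ∑ s ∈ range M, v s • N ((Δ ^ s) A)) (A : P) :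
    ⁅a, Φ A⁆ = z • Φ (D A) := by
  obtain ⟨M, hA, hDA⟩ := ((hΦ A).and (hΦ (D A))).exists
  have hswap (s : ℕ) : D ((Δ ^ s) A) = (Δ ^ s) (D A) :=
    LinearMap.congr_fun (hcomm.pow_right s).eq A
  simp only [hA, hDA, lie_sum, ring_lie_smul, hN, hswap, smul_sum, smul_comm z]

end Commutator

section PartialDerivatives

variable {σ K : Type*}

lemma commute_pderiv [CommRing K] (i j : σ) :
    Commute (pderiv (R := K) i).toLinearMap (pderiv (R := K) j).toLinearMap := by
  classical
  have hlie : ⁅pderiv (R := K) i, pderiv (R := K) j⁆ = 0 := derivation_ext fun k => by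
    simp [Derivation.commutator_apply, pderiv_X, Pi.single_apply, apply_ite]
  refine LinearMap.ext fun A => sub_eq_zero.mp ?_
  simpa [Derivation.commutator_apply] using congrArg (fun D => D A) hlie

lemma pderiv_pow_apply_monomial [CommSemiring K] (i : σ) (s : ℕ) (u : σ →₀ ℕ) (r : K) :
    ((pderiv (R := K) i).toLinearMap ^ s) (monomial u r) =
      monomial (u - Finsupp.single i s) (r * (u i).descFactorial s) := by
  induction s with
  | zero => simp
  | succ s ih =>
    rw [pow_succ', Module.End.mul_apply, ih, Derivation.coeFn_coe, pderiv_monomial, tsub_tsub,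
      ← Finsupp.single_add, Finsupp.tsub_apply, Finsupp.single_eq_same, Nat.descFactorial_succ]
    push_cast
    ring_nf

end PartialDerivatives

/-- The operator `∂_x ∂_p` on `K[x, p]`, where `x` is variable `0` and `p` is variable `1`; the maps
`Φ_c` differ from normal ordering by power series in it. -/
def mixedPderiv (K : Type*) [CommRing K] : Module.End K (MvPolynomial (Fin 2) K) :=
  (pderiv 0).toLinearMap * (pderiv 1).toLinearMap

section MixedPartial

variable {K : Type*} [CommRing K]

lemma commute_pderiv_mixedPderiv (i : Fin 2) :
    Commute (pderiv (R := K) i).toLinearMap (mixedPderiv K) :=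
  (commute_pderiv i 0).mul_right (commute_pderiv i 1)

lemma mixedPderiv_pow_apply_monomial (s : ℕ) (u : Fin 2 →₀ ℕ) (r : K) :
    (mixedPderiv K ^ s) (monomial u r) =
      monomial (u - Finsupp.single 1 s - Finsupp.single 0 s)
        (r * (u 1).descFactorial s * (u 0).descFactorial s) := by
  rw [mixedPderiv, (commute_pderiv 0 1).mul_pow, Module.End.mul_apply, pderiv_pow_apply_monomial,
    pderiv_pow_apply_monomial]
  simp

end MixedPartial

/-- Normal ordering for operators `p` and `x`: the linear map on `K[x, p]` (with `x` as variable `0`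
and `p` as variable `1`) that replaces the variables by the operators, writing all factors `p` to
the left of all factors `x`. -/
def normalOrder (K : Type*) {R : Type*} [CommRing K] [Ring R] [Algebra K R] (p x : R) :
    MvPolynomial (Fin 2) K →ₗ[K] R :=
  (basisMonomials (Fin 2) K).constr K fun u => p ^ u 1 * x ^ u 0

section NormalOrder

attribute [local instance] LieRing.ofAssociativeRing

variable {K R : Type*} [CommRing K] [Ring R] [Algebra K R]

lemma normalOrder_monomial (p x : R) (u : Fin 2 →₀ ℕ) (r : K) :
    normalOrder K p x (monomial u r) = r • (p ^ u 1 * x ^ u 0) := by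
  have hu : (monomial u r : MvPolynomial (Fin 2) K) = r • basisMonomials (Fin 2) K u := by
    simp [smul_monomial]
  rw [hu, map_smul, normalOrder, Module.Basis.constr_basis]

lemma lie_x_normalOrder {x p : R} {z : K} (h : ⁅x, p⁆ = z • (1 : R))
    (A : MvPolynomial (Fin 2) K) :
    ⁅x, normalOrder K p x A⁆ = z • normalOrder K p x (pderiv 1 A) := by
  induction A using MvPolynomial.induction_on' with
  | monomial u r =>
    have hxx : ⁅x, x ^ u 0⁆ = 0 := ((Commute.refl x).pow_right _).lie_eq
    rw [pderiv_monomial, normalOrder_monomial, normalOrder_monomial, ring_lie_smul,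
      ring_lie_mul, lie_pow_of_lie_eq_smul_one h, hxx]
    simp [smul_smul, mul_left_comm]
  | add A B hA hB => simp only [map_add, lie_add, hA, hB, smul_add]

lemma lie_p_normalOrder {x p : R} {z : K} (h : ⁅x, p⁆ = z • (1 : R))
    (A : MvPolynomial (Fin 2) K) :
    ⁅p, normalOrder K p x A⁆ = -z • normalOrder K p x (pderiv 0 A) := by
  have hpx : ⁅p, x⁆ = -z • (1 : R) := by rw [← lie_skew, h, neg_smul]
  induction A using MvPolynomial.induction_on' with
  | monomial u r =>
    have hpp : ⁅p, p ^ u 1⁆ = 0 := ((Commute.refl p).pow_right _).lie_eq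
    rw [pderiv_monomial, normalOrder_monomial, normalOrder_monomial, ring_lie_smul,
      ring_lie_mul, lie_pow_of_lie_eq_smul_one hpx, hpp]
    simp [smul_smul, mul_left_comm]
  | add A B hA hB => simp only [map_add, lie_add, hA, hB, smul_add]

lemma normalOrder_mixedPderiv_pow_monomial (p x : R) (s : ℕ) (u : Fin 2 →₀ ℕ) (r : K) :
    normalOrder K p x ((mixedPderiv K ^ s) (monomial u r)) =
      (r * (u 1).descFactorial s * (u 0).descFactorial s) • (p ^ (u 1 - s) * x ^ (u 0 - s)) := by
  simp [mixedPderiv_pow_apply_monomial, normalOrder_monomial]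

end NormalOrder

section Quantization

variable {K R : Type*} [Field K] [CharZero K] [Ring R] [Algebra K R]

lemma factorial_mul_div_eq_descFactorial_mul_div {m n s : ℕ} (hm : s ≤ m) (hn : s ≤ n) :
    (m.factorial * n.factorial : K) / (s.factorial * (m - s).factorial * (n - s).factorial) =
      m.descFactorial s * n.descFactorial s / s.factorial := by
  rw [← Nat.factorial_mul_descFactorial hm, ← Nat.factorial_mul_descFactorial hn]
  have hfactorial (k : ℕ) : (k.factorial : K) ≠ 0 := Nat.cast_ne_zero.mpr k.factorial_ne_zero
  have := hfactorial s
  have := hfactorial (m - s)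
  have := hfactorial (n - s)
  push_cast
  field_simp

lemma eventually_eq_sum_normalOrder_mixedPderiv_pow {p x : R} {w : ℕ → K}
    {Φ : MvPolynomial (Fin 2) K →ₗ[K] R}
    (hΦ : ∀ m n : ℕ, Φ (X 1 ^ m * X 0 ^ n) = ∑ s ∈ range (min m n + 1),
      (w s * ((m.factorial * n.factorial : K) /
        (s.factorial * (m - s).factorial * (n - s).factorial))) • (p ^ (m - s) * x ^ (n - s)))
    (A : MvPolynomial (Fin 2) K) :
    ∀ᶠ M in Filter.atTop,
      Φ A = ∑ s ∈ range M, (w s / s.factorial) • normalOrder K p x ((mixedPderiv K ^ s) A) := by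
  induction A using MvPolynomial.induction_on' with
  | monomial u r =>
    filter_upwards [Filter.eventually_ge_atTop (min (u 1) (u 0) + 1)] with M hM
    have hu : (monomial u r : MvPolynomial (Fin 2) K) = r • (X 1 ^ u 1 * X 0 ^ u 0) := by
      rw [monomial_eq, Finsupp.prod_fintype _ _ (by simp), Fin.prod_univ_two, smul_eq_C_mul,
        mul_comm (X 1 ^ _)]
    simp only [normalOrder_mixedPderiv_pow_monomial, smul_smul]
    rw [hu, map_smul, hΦ, smul_sum, ← sum_subset (range_mono hM)]
    · refine sum_congr rfl fun s hs => ?_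
      have hs : s ≤ u 1 ∧ s ≤ u 0 := le_min_iff.mp (Nat.lt_succ_iff.mp (mem_range.mp hs))
      rw [factorial_mul_div_eq_descFactorial_mul_div hs.1 hs.2, smul_smul]
      congr 1
      ring
    · intro s _ hs
      have hs : u 1 < s ∨ u 0 < s := by simpa [Nat.lt_succ_iff, imp_iff_not_or] using hs
      rcases hs with hs | hs <;> simp [Nat.descFactorial_eq_zero_iff_lt.mpr hs]
  | add A B hA hB =>
    filter_upwards [hA, hB] with M hA hB
    simp only [map_add, smul_add, sum_add_distrib, hA, hB]

theorem stmt0_general {x p : R} {z : K} (hxp : ⁅x, p⁆ = z • (1 : R)) (w : ℕ → K)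
    (Φ : MvPolynomial (Fin 2) K →ₗ[K] R)
    (hΦ : ∀ m n : ℕ, Φ (X 1 ^ m * X 0 ^ n) = ∑ s ∈ range (min m n + 1),
      (w s * ((m.factorial * n.factorial : K) /
        (s.factorial * (m - s).factorial * (n - s).factorial))) • (p ^ (m - s) * x ^ (n - s)))
    (A : MvPolynomial (Fin 2) K) :
    ⁅x, Φ A⁆ = z • Φ (pderiv 1 A) ∧ ⁅p, Φ A⁆ = -z • Φ (pderiv 0 A) :=
  have hsum := eventually_eq_sum_normalOrder_mixedPderiv_pow hΦ
  ⟨lie_apply_of_eventually_eq_sum (commute_pderiv_mixedPderiv 1) (lie_x_normalOrder hxp) hsum A,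
    lie_apply_of_eventually_eq_sum (commute_pderiv_mixedPderiv 0) (lie_p_normalOrder hxp) hsum A⟩

end Quantization

section LadderOperators

lemma aop_single_zero (r : ℂ) : aop (Finsupp.single 0 r) = 0 := by
  simp [aop]

lemma aop_single_succ (n : ℕ) (r : ℂ) :
    aop (Finsupp.single (n + 1) r) = Finsupp.single n (((Real.sqrt (n + 1) : ℝ) : ℂ) * r) := by
  simp [aop]

lemma adop_single (n : ℕ) (r : ℂ) :
    adop (Finsupp.single n r) = Finsupp.single (n + 1) (((Real.sqrt (n + 1) : ℝ) : ℂ) * r) := by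
  simp [adop]

lemma ofReal_sqrt_mul_self {t : ℝ} (ht : 0 ≤ t) : (Real.sqrt t : ℂ) * Real.sqrt t = t := by
  rw [← ofReal_mul, Real.mul_self_sqrt ht]

lemma aop_adop_single (n : ℕ) (r : ℂ) :
    aop (adop (Finsupp.single n r)) = Finsupp.single n ((n + 1) * r) := by
  rw [adop_single, aop_single_succ, ← mul_assoc, ofReal_sqrt_mul_self (by positivity)]
  push_cast
  rfl

lemma adop_aop_single (n : ℕ) (r : ℂ) :
    adop (aop (Finsupp.single n r)) = Finsupp.single n (n * r) := by
  rcases n with _ | n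
  · simp [aop_single_zero]
  · rw [aop_single_succ, adop_single, ← mul_assoc, ofReal_sqrt_mul_self (by positivity)]
    push_cast
    rfl

lemma lie_adop_aop : ⁅(adop : Module.End ℂ (ℕ →₀ ℂ)), (aop : Module.End ℂ (ℕ →₀ ℂ))⁆ = -1 := by
  refine Finsupp.lhom_ext fun n r => ?_
  rw [Ring.lie_def, LinearMap.sub_apply, Module.End.mul_apply, Module.End.mul_apply,
    aop_adop_single, adop_aop_single, ← Finsupp.single_sub, LinearMap.neg_apply,
    Module.End.one_apply, ← Finsupp.single_neg]
  ring_nf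

end LadderOperators

/-- for every sequence `c` with `c 0 = 1`, the linear map `Φ_c` defined on the
monomial basis by `Φ_c(p^m x^n) = Σ_{s=0}^{min(m,n)} (−1)^s (m!n!/(s!(m−s)!(n−s)!)) c_s ℏ^s
F^{(m−s,n−s)}` satisfies the modified Dirac quantization rules. -/
theorem stmt0 (ℏ : ℝ) (hℏ : ℏ ≠ 0) (c : ℕ → ℂ) (hc : c 0 = 1)
    (Φ : Pxp →ₗ[ℂ] Module.End ℂ (ℕ →₀ ℂ))
    (hΦ : ∀ m n : ℕ, Φ (pv ^ m * xv ^ n) =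
      ∑ s ∈ Finset.range (min m n + 1),
        ((-1 : ℂ) ^ s *
            ((m.factorial * n.factorial : ℂ) /
              (s.factorial * (m - s).factorial * (n - s).factorial)) *
            c s * (ℏ : ℂ) ^ s) • F ℏ (m - s) (n - s)) :
    ∀ A : Pxp,
      (adop : Module.End ℂ (ℕ →₀ ℂ)) * Φ A - Φ A * (adop : Module.End ℂ (ℕ →₀ ℂ)) =
        (Complex.I * ℏ) • Φ (Dp A) ∧
      ((-(Complex.I * ℏ)) • (aop : Module.End ℂ (ℕ →₀ ℂ))) * Φ A -
          Φ A * ((-(Complex.I * ℏ)) • (aop : Module.End ℂ (ℕ →₀ ℂ))) =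
        (-(Complex.I * ℏ)) • Φ (Dx A) := by
  refine stmt0_general (lie_neg_smul_of_lie_eq_neg_one lie_adop_aop (I * ℏ))
    (fun s => (-1) ^ s * c s * (ℏ : ℂ) ^ s) Φ fun m n =>
    (hΦ m n).trans (sum_congr rfl fun s _ => ?_)
  rw [F]
  congr 1
  ring

end
end

section
/- Let α : ℕ → ℂ be a sequence with α_0 = 1, define g_α(m,n,s) = (i/2)^s · (m!·n!/((m−s)!·(n−s)!)) · Σ_{k=0}^s (2i)^k · α_k/(s−k)!, and define the linear map Φ_α : ℂ[x,p] → End_ℂ(V) on the monomial basis by Φ_α(p^m x^n) = Σ_{s=0}^{min(m,n)} g_α(m,n,s) · ħ^s · F^{(m−s,n−s)}. Let Φ_W denote Φ_α for the trivial sequence α = (1,0,0,…), i.e. Φ_W(p^m x^n) = Σ_{s=0}^{min(m,n)} ((iħ)^s · m!·n!/(2^s·s!·(m−s)!·(n−s)!)) · F^{(m−s,n−s)}. Then Φ_α = Φ_W ∘ α̂, i.e. Φ_α(A) = Φ_W(α̂ A) for every polynomial A. -/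
open Complex MvPolynomial Finset

noncomputable section

/-- `g_α(m,n,s) = (i/2)^s (m!n!/((m−s)!(n−s)!)) Σ_{k=0}^s (2i)^k α_k/(s−k)!`. -/
def gα (α : ℕ → ℂ) (m n s : ℕ) : ℂ :=
  (Complex.I / 2) ^ s *
    ((m.factorial * n.factorial : ℂ) / ((m - s).factorial * (n - s).factorial)) *
    ∑ k ∈ Finset.range (s + 1), (2 * Complex.I) ^ k * α k / ((s - k).factorial : ℂ)

/-!
Put `D = ∂_x ∂_p` and let `N` be the linear map `p^m x^n ↦ F^{(m,n)}`. Since `D` is locally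
nilpotent, every formal power series `f` gives an operator `f(D)`, and `(f g)(D) = f(D) g(D)`. Now
`D^s (p^m x^n) = m! n! / ((m-s)! (n-s)!) p^(m-s) x^(n-s)`, so `Φ_W = N ∘ exp(iℏD/2)`. As
`-ℏ = (iℏ/2)(2i)`, the numbers `(iℏ/2)^s Σ_k (2i)^k α_k / (s-k)!` are the coefficients of the
product of `exp(iℏX/2)` and `Σ_k α_k (-ℏX)^k`, so `Φ_α = N ∘ exp(iℏD/2) ∘ α̂`.
-/

section LocallyNilpotent

variable {R M : Type*} [CommRing R] [AddCommGroup M] [Module R M] {D : Module.End R M}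

/-- Local nilpotency of an endomorphism: every vector is killed by some power, which may depend on
the vector. This is what makes a formal power series in `D` meaningful without a topology. -/
def IsLocallyNilpotent (D : Module.End R M) : Prop :=
  ∀ v, ∃ n, (D ^ n) v = 0

theorem aeval_apply_eq_of_X_pow_dvd_sub {n : ℕ} {P Q : Polynomial R} {v : M}
    (hPQ : Polynomial.X ^ n ∣ P - Q) (hv : (D ^ n) v = 0) :
    Polynomial.aeval D P v = Polynomial.aeval D Q v := by
  obtain ⟨S, hS⟩ := hPQ
  rw [← sub_eq_zero, ← LinearMap.sub_apply, ← map_sub, hS, mul_comm, map_mul, map_pow,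
    Polynomial.aeval_X, Module.End.mul_apply, hv, map_zero]

theorem pow_apply_aeval_eq_zero {n : ℕ} {v : M} (P : Polynomial R) (hv : (D ^ n) v = 0) :
    (D ^ n) (Polynomial.aeval D P v) = 0 := by
  have hcomm : D ^ n * Polynomial.aeval D P = Polynomial.aeval D P * D ^ n := by
    rw [← Polynomial.aeval_X_pow (R := R) D, ← map_mul, mul_comm, map_mul]
  rw [← Module.End.mul_apply, hcomm, Module.End.mul_apply, hv, map_zero]

theorem X_pow_dvd_trunc_sub_trunc {m n : ℕ} (f : PowerSeries R) (hnm : n ≤ m) :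
    Polynomial.X ^ n ∣ f.trunc m - f.trunc n := by
  refine Polynomial.X_pow_dvd_iff.2 fun d hd => ?_
  rw [Polynomial.coeff_sub, PowerSeries.coeff_trunc, PowerSeries.coeff_trunc,
    if_pos (hd.trans_le hnm), if_pos hd, sub_self]

theorem X_pow_dvd_trunc_mul_trunc_sub_trunc_mul (n : ℕ) (f g : PowerSeries R) :
    Polynomial.X ^ n ∣ f.trunc n * g.trunc n - (f * g).trunc n := by
  refine Polynomial.X_pow_dvd_iff.2 fun d hd => ?_
  rw [Polynomial.coeff_sub, PowerSeries.coeff_trunc, if_pos hd,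
    PowerSeries.coeff_mul_eq_coeff_trunc_mul_trunc f g hd, ← Polynomial.coe_mul,
    Polynomial.coeff_coe, sub_self]

theorem aeval_trunc_apply_eq {m n : ℕ} {v : M} (f : PowerSeries R)
    (hm : (D ^ m) v = 0) (hn : (D ^ n) v = 0) :
    Polynomial.aeval D (f.trunc m) v = Polynomial.aeval D (f.trunc n) v := by
  rcases le_total n m with hnm | hmn
  · exact aeval_apply_eq_of_X_pow_dvd_sub (X_pow_dvd_trunc_sub_trunc f hnm) hn
  · exact (aeval_apply_eq_of_X_pow_dvd_sub (X_pow_dvd_trunc_sub_trunc f hmn) hm).symm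

theorem aeval_trunc_apply_eq_sum (n : ℕ) (f : PowerSeries R) (v : M) :
    Polynomial.aeval D (f.trunc n) v = ∑ k ∈ range n, f.coeff k • (D ^ k) v := by
  simp [Polynomial.aeval_def, PowerSeries.eval₂_trunc_eq_sum_range, LinearMap.sum_apply]

/-- The operator `f(D)`, for a power series `f` in a locally nilpotent endomorphism `D`. On `v` it
is the truncation of `f` at some power of `D` killing `v`; by `powerSeriesEval_apply` the choice of
that power is immaterial. -/
def powerSeriesEval (hD : IsLocallyNilpotent D) (f : PowerSeries R) : Module.End R M where
  toFun v := Polynomial.aeval D (f.trunc (hD v).choose) v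
  map_add' v w := by
    set n := max (hD v).choose (hD w).choose
    have hv : (D ^ n) v = 0 := Module.End.pow_map_zero_of_le (le_max_left _ _) (hD v).choose_spec
    have hw : (D ^ n) w = 0 := Module.End.pow_map_zero_of_le (le_max_right _ _) (hD w).choose_spec
    have hvw : (D ^ n) (v + w) = 0 := by rw [map_add, hv, hw, add_zero]
    rw [aeval_trunc_apply_eq f (hD (v + w)).choose_spec hvw, map_add,
      aeval_trunc_apply_eq f (hD v).choose_spec hv, aeval_trunc_apply_eq f (hD w).choose_spec hw]
  map_smul' c v := by
    have hcv : (D ^ (hD v).choose) (c • v) = 0 := by rw [map_smul, (hD v).choose_spec, smul_zero]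
    rw [aeval_trunc_apply_eq f (hD (c • v)).choose_spec hcv, map_smul, RingHom.id_apply]

theorem powerSeriesEval_apply (hD : IsLocallyNilpotent D) (f : PowerSeries R) {n : ℕ} {v : M}
    (hv : (D ^ n) v = 0) : powerSeriesEval hD f v = Polynomial.aeval D (f.trunc n) v :=
  aeval_trunc_apply_eq f (hD v).choose_spec hv

theorem powerSeriesEval_apply_eq_sum (hD : IsLocallyNilpotent D) (f : PowerSeries R) {n : ℕ}
    {v : M} (hv : (D ^ n) v = 0) :
    powerSeriesEval hD f v = ∑ k ∈ range n, f.coeff k • (D ^ k) v := by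
  rw [powerSeriesEval_apply hD f hv, aeval_trunc_apply_eq_sum]

theorem powerSeriesEval_mul (hD : IsLocallyNilpotent D) (f g : PowerSeries R) :
    powerSeriesEval hD (f * g) = powerSeriesEval hD f * powerSeriesEval hD g := by
  ext v
  obtain ⟨n, hv⟩ := hD v
  rw [Module.End.mul_apply, powerSeriesEval_apply hD (f * g) hv, powerSeriesEval_apply hD g hv,
    powerSeriesEval_apply hD f (pow_apply_aeval_eq_zero _ hv), ← Module.End.mul_apply, ← map_mul]
  exact (aeval_apply_eq_of_X_pow_dvd_sub (X_pow_dvd_trunc_mul_trunc_sub_trunc_mul n f g) hv).symm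

end LocallyNilpotent

section Monomials

theorem monomial_eq_smul_pv_pow_mul_xv_pow (u : Fin 2 →₀ ℕ) (c : ℂ) :
    monomial u c = c • (pv ^ u 1 * xv ^ u 0) := by
  rw [monomial_eq, Finsupp.prod_fintype _ _ (by simp), Fin.prod_univ_two, smul_eq_C_mul, pv, xv,
    mul_comm (X 0 ^ u 0)]

theorem pv_pow_mul_xv_pow_eq_monomial (m n : ℕ) :
    pv ^ m * xv ^ n = monomial (Finsupp.single 1 m + Finsupp.single 0 n) (1 : ℂ) := by
  simp [monomial_eq_smul_pv_pow_mul_xv_pow]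

theorem totalDegree_pv_pow_mul_xv_pow (m n : ℕ) : (pv ^ m * xv ^ n).totalDegree = m + n := by
  rw [pv_pow_mul_xv_pow_eq_monomial, totalDegree_monomial _ one_ne_zero,
    Finsupp.sum_add_index'] <;> simp

theorem linearMap_ext_pv_pow_mul_xv_pow {M : Type*} [AddCommMonoid M] [Module ℂ M]
    {Φ Ψ : Pxp →ₗ[ℂ] M} (h : ∀ m n, Φ (pv ^ m * xv ^ n) = Ψ (pv ^ m * xv ^ n)) : Φ = Ψ := by
  refine (basisMonomials (Fin 2) ℂ).ext fun u => ?_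
  simp only [coe_basisMonomials, monomial_eq_smul_pv_pow_mul_xv_pow, one_smul, h]

theorem Dx_mul_Dp_apply (m n : ℕ) :
    (Dx * Dp) (pv ^ m * xv ^ n) = ((m * n : ℕ) : ℂ) • (pv ^ (m - 1) * xv ^ (n - 1)) := by
  have hDp : Dp (pv ^ m * xv ^ n) = (m : ℂ) • (pv ^ (m - 1) * xv ^ n) := by
    simp only [Dp, pv, xv, Derivation.coeFn_coe, Derivation.leibniz, Derivation.leibniz_pow,
      pderiv_X_self, pderiv_X_of_ne zero_ne_one, smul_eq_mul, nsmul_eq_mul, mul_zero, mul_one,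
      zero_add, smul_eq_C_mul, map_natCast]
    ring
  have hDx : Dx (pv ^ (m - 1) * xv ^ n) = (n : ℂ) • (pv ^ (m - 1) * xv ^ (n - 1)) := by
    simp only [Dx, pv, xv, Derivation.coeFn_coe, Derivation.leibniz, Derivation.leibniz_pow,
      pderiv_X_self, pderiv_X_of_ne one_ne_zero, smul_eq_mul, nsmul_eq_mul, mul_zero, mul_one,
      add_zero, smul_eq_C_mul, map_natCast]
    ring
  rw [Module.End.mul_apply, hDp, map_smul, hDx, smul_smul, Nat.cast_mul]

theorem Dx_mul_Dp_pow_apply (m n k : ℕ) :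
    ((Dx * Dp) ^ k) (pv ^ m * xv ^ n) =
      ((m.descFactorial k * n.descFactorial k : ℕ) : ℂ) • (pv ^ (m - k) * xv ^ (n - k)) := by
  induction k with
  | zero => simp
  | succ k ih =>
    rw [pow_succ', Module.End.mul_apply, ih, map_smul, Dx_mul_Dp_apply, smul_smul, ← Nat.cast_mul,
      Nat.descFactorial_succ, Nat.descFactorial_succ, Nat.sub_sub, Nat.sub_sub,
      mul_mul_mul_comm, mul_comm (m.descFactorial k), mul_comm (n.descFactorial k)]

theorem Dx_mul_Dp_pow_apply_eq_zero {m n k : ℕ} (hk : min m n < k) :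
    ((Dx * Dp) ^ k) (pv ^ m * xv ^ n) = 0 := by
  rw [Dx_mul_Dp_pow_apply]
  rcases min_lt_iff.1 hk with h | h <;> simp [Nat.descFactorial_of_lt h]

theorem isLocallyNilpotent_Dx_mul_Dp : IsLocallyNilpotent (Dx * Dp) := by
  intro A
  induction A using MvPolynomial.induction_on' with
  | monomial u c =>
    refine ⟨min (u 1) (u 0) + 1, ?_⟩
    rw [monomial_eq_smul_pv_pow_mul_xv_pow, map_smul,
      Dx_mul_Dp_pow_apply_eq_zero (Nat.lt_succ_self _), smul_zero]
  | add A B hA hB =>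
    obtain ⟨m, hm⟩ := hA
    obtain ⟨n, hn⟩ := hB
    refine ⟨max m n, ?_⟩
    rw [map_add, Module.End.pow_map_zero_of_le (le_max_left m n) hm,
      Module.End.pow_map_zero_of_le (le_max_right m n) hn, add_zero]

end Monomials

section Quantization

variable {M : Type*} [AddCommMonoid M] [Module ℂ M]

/-- Normal ordering with respect to a family `G` of vectors: the linear map `p^m x^n ↦ G m n`. -/
def normalOrdering (G : ℕ → ℕ → M) : Pxp →ₗ[ℂ] M :=
  (basisMonomials (Fin 2) ℂ).constr ℂ fun u => G (u 1) (u 0)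

theorem normalOrdering_pv_pow_mul_xv_pow (G : ℕ → ℕ → M) (m n : ℕ) :
    normalOrdering G (pv ^ m * xv ^ n) = G m n := by
  have hbasis : pv ^ m * xv ^ n =
      basisMonomials (Fin 2) ℂ (Finsupp.single 1 m + Finsupp.single 0 n) := by
    rw [pv_pow_mul_xv_pow_eq_monomial, coe_basisMonomials]
  rw [hbasis, normalOrdering, Module.Basis.constr_basis]
  simp

theorem eq_normalOrdering_comp_powerSeriesEval {G : ℕ → ℕ → M} {Φ : Pxp →ₗ[ℂ] M}
    (f : PowerSeries ℂ)
    (hΦ : ∀ m n, Φ (pv ^ m * xv ^ n) = ∑ s ∈ range (min m n + 1),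
      (f.coeff s * (m.descFactorial s * n.descFactorial s : ℕ)) • G (m - s) (n - s)) :
    Φ = normalOrdering G ∘ₗ powerSeriesEval isLocallyNilpotent_Dx_mul_Dp f := by
  refine linearMap_ext_pv_pow_mul_xv_pow fun m n => ?_
  rw [hΦ, LinearMap.comp_apply, powerSeriesEval_apply_eq_sum _ f
    (Dx_mul_Dp_pow_apply_eq_zero (Nat.lt_succ_self (min m n))), map_sum]
  refine sum_congr rfl fun s _ => ?_
  rw [Dx_mul_Dp_pow_apply, smul_smul, map_smul, normalOrdering_pv_pow_mul_xv_pow]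

/-- The series `exp(iℏX/2)`, whose value at `∂_x ∂_p` turns normal ordering into Weyl ordering. -/
def weylSeries (ℏ : ℂ) : PowerSeries ℂ :=
  PowerSeries.rescale (I * ℏ / 2) (PowerSeries.exp ℂ)

/-- The series `Σ_k α_k (-ℏX)^k`, whose value at `∂_x ∂_p` is `α̂`. -/
def alphaSeries (α : ℕ → ℂ) (ℏ : ℂ) : PowerSeries ℂ :=
  PowerSeries.mk fun k => α k * (-ℏ) ^ k

theorem coeff_weylSeries (ℏ : ℂ) (s : ℕ) :
    (weylSeries ℏ).coeff s = (I * ℏ / 2) ^ s / s.factorial := by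
  simp [weylSeries, PowerSeries.coeff_rescale, PowerSeries.coeff_exp, div_eq_mul_inv]

theorem coeff_weylSeries_mul_alphaSeries (α : ℕ → ℂ) (ℏ : ℂ) (s : ℕ) :
    (weylSeries ℏ * alphaSeries α ℏ).coeff s =
      (I * ℏ / 2) ^ s * ∑ k ∈ range (s + 1), (2 * I) ^ k * α k / (s - k).factorial := by
  rw [mul_comm, PowerSeries.coeff_mul, Nat.sum_antidiagonal_eq_sum_range_succ_mk, mul_sum]
  refine sum_congr rfl fun k hk => ?_
  have hneg : -ℏ = I * ℏ / 2 * (2 * I) := by linear_combination -ℏ * I_mul_I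
  have hpow : (I * ℏ / 2) ^ s = (I * ℏ / 2) ^ k * (I * ℏ / 2) ^ (s - k) := by
    rw [← pow_add, Nat.add_sub_cancel' (mem_range_succ_iff.1 hk)]
  rw [alphaSeries, PowerSeries.coeff_mk, coeff_weylSeries, hpow, hneg, mul_pow]
  ring

theorem cast_descFactorial_eq_div {K : Type*} [DivisionRing K] [CharZero K] {n k : ℕ}
    (h : k ≤ n) : (n.descFactorial k : K) = n.factorial / (n - k).factorial := by
  rw [eq_div_iff (Nat.cast_ne_zero.2 (Nat.factorial_ne_zero _)), ← Nat.cast_mul, mul_comm,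
    Nat.factorial_mul_descFactorial h]

theorem gα_mul_pow_eq_coeff_mul (α : ℕ → ℂ) (ℏ : ℂ) {m n s : ℕ} (hm : s ≤ m) (hn : s ≤ n) :
    gα α m n s * ℏ ^ s = (weylSeries ℏ * alphaSeries α ℏ).coeff s *
      (m.descFactorial s * n.descFactorial s : ℕ) := by
  rw [gα, coeff_weylSeries_mul_alphaSeries, Nat.cast_mul, cast_descFactorial_eq_div hm,
    cast_descFactorial_eq_div hn, mul_div_right_comm I ℏ 2, mul_pow]
  ring

theorem weyl_coeff_eq_coeff_mul (ℏ : ℂ) {m n s : ℕ} (hm : s ≤ m) (hn : s ≤ n) :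
    (I * ℏ) ^ s * (m.factorial * n.factorial : ℂ) /
        (2 ^ s * s.factorial * (m - s).factorial * (n - s).factorial) =
      (weylSeries ℏ).coeff s * (m.descFactorial s * n.descFactorial s : ℕ) := by
  rw [coeff_weylSeries, Nat.cast_mul, cast_descFactorial_eq_div hm, cast_descFactorial_eq_div hn,
    div_pow]
  ring

theorem eq_powerSeriesEval_alphaSeries {α : ℕ → ℂ} {ℏ : ℂ} {T : Pxp →ₗ[ℂ] Pxp}
    (hT : ∀ A : Pxp, T A = ∑ k ∈ range (A.totalDegree + 1),
      (α k * (-ℏ) ^ k) • (((Dx * Dp) ^ k) A)) :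
    T = powerSeriesEval isLocallyNilpotent_Dx_mul_Dp (alphaSeries α ℏ) := by
  refine linearMap_ext_pv_pow_mul_xv_pow fun m n => ?_
  have hvanish : ((Dx * Dp) ^ (m + n + 1)) (pv ^ m * xv ^ n) = 0 :=
    Dx_mul_Dp_pow_apply_eq_zero (by omega)
  simp only [hT, totalDegree_pv_pow_mul_xv_pow, powerSeriesEval_apply_eq_sum _ _ hvanish,
    alphaSeries, PowerSeries.coeff_mk]

theorem stmt5_general (ℏ : ℂ) (α : ℕ → ℂ) (G : ℕ → ℕ → M)
    (T : Pxp →ₗ[ℂ] Pxp)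
    (hT : ∀ A : Pxp, T A = ∑ k ∈ range (A.totalDegree + 1),
      (α k * (-ℏ) ^ k) • (((Dx * Dp) ^ k) A))
    (Φα : Pxp →ₗ[ℂ] M)
    (hΦα : ∀ m n : ℕ, Φα (pv ^ m * xv ^ n) =
      ∑ s ∈ range (min m n + 1), (gα α m n s * ℏ ^ s) • G (m - s) (n - s))
    (ΦW : Pxp →ₗ[ℂ] M)
    (hΦW : ∀ m n : ℕ, ΦW (pv ^ m * xv ^ n) =
      ∑ s ∈ range (min m n + 1),
        ((I * ℏ) ^ s * (m.factorial * n.factorial : ℂ) /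
          (2 ^ s * s.factorial * (m - s).factorial * (n - s).factorial)) • G (m - s) (n - s)) :
    Φα = ΦW ∘ₗ T := by
  have hα : Φα = normalOrdering G ∘ₗ
      powerSeriesEval isLocallyNilpotent_Dx_mul_Dp (weylSeries ℏ * alphaSeries α ℏ) := by
    refine eq_normalOrdering_comp_powerSeriesEval _ fun m n => ?_
    rw [hΦα]
    refine sum_congr rfl fun s hs => ?_
    obtain ⟨hm, hn⟩ := le_min_iff.1 (mem_range_succ_iff.1 hs)
    rw [gα_mul_pow_eq_coeff_mul α ℏ hm hn]
  have hW : ΦW = normalOrdering G ∘ₗ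
      powerSeriesEval isLocallyNilpotent_Dx_mul_Dp (weylSeries ℏ) := by
    refine eq_normalOrdering_comp_powerSeriesEval _ fun m n => ?_
    rw [hΦW]
    refine sum_congr rfl fun s hs => ?_
    obtain ⟨hm, hn⟩ := le_min_iff.1 (mem_range_succ_iff.1 hs)
    rw [weyl_coeff_eq_coeff_mul ℏ hm hn]
  rw [hα, hW, eq_powerSeriesEval_alphaSeries hT, powerSeriesEval_mul, Module.End.mul_eq_comp,
    LinearMap.comp_assoc]

end Quantization

/-- `Φ_α = Φ_W ∘ α̂`, where `Φ_W` is the Weyl (Moyal) quantization map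
`Φ_W(p^m x^n) = Σ_s ((iℏ)^s m!n!/(2^s s!(m−s)!(n−s)!)) F^{(m−s,n−s)}` and
`α̂ A = Σ_k α_k (−ℏ)^k (∂_x∂_p)^k A`. -/
theorem stmt5 (ℏ : ℝ) (hℏ : ℏ ≠ 0) (α : ℕ → ℂ) (hα : α 0 = 1)
    (T : Pxp →ₗ[ℂ] Pxp)
    (hT : ∀ A : Pxp, T A = ∑ k ∈ Finset.range (A.totalDegree + 1),
      (α k * (-(ℏ : ℂ)) ^ k) • (((Dx * Dp) ^ k) A))
    (Φα : Pxp →ₗ[ℂ] Module.End ℂ (ℕ →₀ ℂ))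
    (hΦα : ∀ m n : ℕ, Φα (pv ^ m * xv ^ n) =
      ∑ s ∈ Finset.range (min m n + 1), (gα α m n s * (ℏ : ℂ) ^ s) • F ℏ (m - s) (n - s))
    (ΦW : Pxp →ₗ[ℂ] Module.End ℂ (ℕ →₀ ℂ))
    (hΦW : ∀ m n : ℕ, ΦW (pv ^ m * xv ^ n) =
      ∑ s ∈ Finset.range (min m n + 1),
        ((Complex.I * ℏ) ^ s * (m.factorial * n.factorial : ℂ) /
          (2 ^ s * s.factorial * (m - s).factorial * (n - s).factorial)) •
          F ℏ (m - s) (n - s)) :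
    ∀ A : Pxp, Φα A = ΦW (T A) := by
  exact LinearMap.congr_fun (stmt5_general ℏ α (F ℏ) T hT Φα hΦα ΦW hΦW)

end
end

section
/- On the space W = ℕ → ℂ of all complex sequences, with the linear maps a, a† : W → W given by (a v)_n = √(n+1)·v_{n+1} and (a† v)_0 = 0, (a† v)_{n+1} = √(n+1)·v_n, the map G : W → W given componentwise by G v = Σ_{k=0}^∞ (1/(2^k · k!)) · ((a†)²)^k v is well defined (each component of G v is a finite sum, since (a†)² raises indices by 2), and it satisfies G ∘ a† = a† ∘ G and G ∘ a = (a − a†) ∘ G. Consequently G ∘ (a† + (1/2)·a) = ((1/2)·(a† + a)) ∘ G and G ∘ (−iħ·a) = (iħ·(a† − a)) ∘ G. -/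
open Complex

noncomputable section

/-- The destruction operator on the space `W = ℕ → ℂ` of all sequences:
`(a v)_n = √(n+1)·v_{n+1}`. -/
def aW : (ℕ → ℂ) →ₗ[ℂ] (ℕ → ℂ) where
  toFun v := fun n => ((Real.sqrt (n + 1) : ℝ) : ℂ) * v (n + 1)
  map_add' v w := by funext n; simp [mul_add]
  map_smul' c v := by funext n; simp; ring

/-- The creation operator on `W = ℕ → ℂ`: `(a† v)_0 = 0`, `(a† v)_{n+1} = √(n+1)·v_n`. -/
def adW : (ℕ → ℂ) →ₗ[ℂ] (ℕ → ℂ) where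
  toFun v := fun n => match n with
    | 0 => 0
    | k + 1 => ((Real.sqrt (k + 1) : ℝ) : ℂ) * v k
  map_add' v w := by funext n; cases n <;> simp [mul_add]
  map_smul' c v := by funext n; cases n <;> simp <;> ring

/-!
Give `ℕ → ℂ` the product topology. Then `a` and `a†` are continuous, and `∑ₖ (a†)²ᵏ v / (2ᵏ k!)`
converges to some `G v` because each of its components has finitely many nonzero terms.
So `a†` and `a` may be applied to the series term by term. Every term commutes with `a†`.
From `a a† = a† a + 1` one gets `[a, (a†)²ᵏ⁺²] = (2k + 2) (a†)²ᵏ⁺¹`, so the commutator of `a` with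
the term of index `k + 1` is `a†` times the term of index `k`; summing over `k`,
`a G = G a + a† G`.
-/

section WeylRelation

theorem mul_pow_succ_of_mul_eq_mul_add_one {A : Type*} [Semiring A] {x y : A}
    (hxy : x * y = y * x + 1) (n : ℕ) :
    x * y ^ (n + 1) = y ^ (n + 1) * x + (n + 1) • y ^ n := by
  induction n with
  | zero => simp [hxy]
  | succ n ih =>
    calc x * y ^ (n + 2)
        = (x * y ^ (n + 1)) * y := by rw [pow_succ y (n + 1), mul_assoc]
      _ = y ^ (n + 1) * (x * y) + (n + 1) • y ^ (n + 1) := by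
          rw [ih, add_mul, mul_assoc, smul_mul_assoc, ← pow_succ]
      _ = y ^ (n + 2) * x + (n + 2) • y ^ (n + 1) := by
          rw [hxy, mul_add, mul_one, ← mul_assoc, ← pow_succ, add_assoc,
            succ_nsmul' (y ^ (n + 1)) (n + 1)]

variable (𝕜 : Type*) {A : Type*} [Field 𝕜] [Semiring A] [Algebra 𝕜 A]

/-- The term `(y²)ᵏ / (2ᵏ k!)` of the formal series `exp (y² / 2)`. In positive
characteristic the coefficient is `1 / 0 = 0` for large `k`. -/
def gaussianTerm (y : A) (k : ℕ) : A :=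
  ((1 : 𝕜) / (2 ^ k * (k.factorial : 𝕜))) • (y ^ 2) ^ k

@[simp]
theorem gaussianTerm_zero (y : A) : gaussianTerm 𝕜 y 0 = 1 := by
  simp [gaussianTerm]

theorem commute_gaussianTerm (y : A) (k : ℕ) : Commute y (gaussianTerm 𝕜 y k) :=
  (((Commute.refl y).pow_right 2).pow_right k).smul_right _

theorem mul_gaussianTerm_succ [CharZero 𝕜] {x y : A} (hxy : x * y = y * x + 1) (k : ℕ) :
    x * gaussianTerm 𝕜 y (k + 1) = gaussianTerm 𝕜 y (k + 1) * x + y * gaussianTerm 𝕜 y k := by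
  have coeff_succ : (1 : 𝕜) / (2 ^ (k + 1) * ((k + 1).factorial : 𝕜)) * ((2 * k + 1 + 1 : ℕ) : 𝕜) =
      1 / (2 ^ k * (k.factorial : 𝕜)) := by
    have factorial_ne_zero : (k.factorial : 𝕜) ≠ 0 := mod_cast k.factorial_ne_zero
    have succ_ne_zero : (k : 𝕜) + 1 ≠ 0 := mod_cast k.succ_ne_zero
    rw [Nat.factorial_succ]
    push_cast
    field_simp
    ring
  simp only [gaussianTerm, ← pow_mul]
  rw [mul_smul_comm, show 2 * (k + 1) = 2 * k + 1 + 1 by ring,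
    mul_pow_succ_of_mul_eq_mul_add_one hxy, smul_add, smul_mul_assoc, mul_smul_comm, ← pow_succ',
    ← Nat.cast_smul_eq_nsmul 𝕜, smul_smul, coeff_succ]

end WeylRelation

section PointwiseSums

theorem exists_linearMap_hasSum {ι R M N : Type*} [Semiring R] [AddCommMonoid M] [Module R M]
    [AddCommMonoid N] [Module R N] [TopologicalSpace N] [T2Space N] [ContinuousAdd N]
    [ContinuousConstSMul R N] {S : ι → M →ₗ[R] N} (hS : ∀ v, Summable fun i ↦ S i v) :
    ∃ G : M →ₗ[R] N, ∀ v, HasSum (fun i ↦ S i v) (G v) := by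
  choose G hG using hS
  refine ⟨{ toFun := G, map_add' := fun v w ↦ ?_, map_smul' := fun c v ↦ ?_ }, hG⟩
  · exact (hG (v + w)).unique (by simpa only [map_add] using (hG v).add (hG w))
  · exact (hG (c • v)).unique (by simpa only [map_smul, RingHom.id_apply] using (hG v).const_smul c)

theorem eq_add_of_hasSum_shift {M : Type*} [AddCommGroup M] [TopologicalSpace M]
    [IsTopologicalAddGroup M] [T2Space M] {f g h : ℕ → M} {a b c : M} (hf : HasSum f a)
    (hg : HasSum g b) (hh : HasSum h c) (zero_eq : f 0 = g 0)
    (succ_eq : ∀ k, f (k + 1) = g (k + 1) + h k) : a = b + c := by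
  have hasSum_tail : HasSum (fun k ↦ f (k + 1) - g (k + 1)) (a - b) := by
    simpa [zero_eq] using (hasSum_nat_add_iff' 1).mpr (hf.sub hg)
  have sub_eq : a - b = c := hasSum_tail.unique (by simpa [succ_eq] using hh)
  rw [← sub_eq, add_sub_cancel]

end PointwiseSums

section GaussianExp

variable {𝕜 E : Type*} [Field 𝕜] [AddCommGroup E] [Module 𝕜 E] [TopologicalSpace E]

/-- `G = exp (b² / 2)`, the exponential series being summed pointwise in the topology of `E`. -/
def IsGaussianExp (b G : Module.End 𝕜 E) : Prop :=
  ∀ v, HasSum (fun k ↦ gaussianTerm 𝕜 b k v) (G v)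

namespace IsGaussianExp

variable [T2Space E] {a b G : Module.End 𝕜 E}

theorem commute (hG : IsGaussianExp b G) (hb : Continuous b) : Commute G b := by
  ext1 v
  have hasSum_bG : HasSum (fun k ↦ b (gaussianTerm 𝕜 b k v)) (b (G v)) := (hG v).map b hb
  have term_comm (k : ℕ) : gaussianTerm 𝕜 b k (b v) = b (gaussianTerm 𝕜 b k v) :=
    LinearMap.congr_fun (commute_gaussianTerm 𝕜 b k).eq.symm v
  exact (hG (b v)).unique (by simpa only [term_comm, Module.End.mul_apply] using hasSum_bG)

theorem mul_eq_sub_mul [CharZero 𝕜] [IsTopologicalAddGroup E] (hG : IsGaussianExp b G)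
    (ha : Continuous a) (hb : Continuous b) (hab : a * b = b * a + 1) :
    G * a = (a - b) * G := by
  ext1 v
  have hasSum_aG : HasSum (fun k ↦ a (gaussianTerm 𝕜 b k v)) (a (G v)) := (hG v).map a ha
  have hasSum_bG : HasSum (fun k ↦ b (gaussianTerm 𝕜 b k v)) (b (G v)) := (hG v).map b hb
  have aG_eq : a (G v) = G (a v) + b (G v) :=
    eq_add_of_hasSum_shift hasSum_aG (hG (a v)) hasSum_bG (by simp)
      fun k ↦ LinearMap.congr_fun (mul_gaussianTerm_succ 𝕜 hab k) v
  exact eq_sub_of_add_eq aG_eq.symm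

end IsGaussianExp

end GaussianExp

section LadderOperators

theorem aW_apply (v : ℕ → ℂ) (n : ℕ) : aW v n = ((√(n + 1) : ℝ) : ℂ) * v (n + 1) := rfl

theorem adW_apply_zero (v : ℕ → ℂ) : adW v 0 = 0 := rfl

theorem adW_apply_succ (v : ℕ → ℂ) (n : ℕ) : adW v (n + 1) = ((√(n + 1) : ℝ) : ℂ) * v n := rfl

theorem continuous_aW : Continuous aW :=
  continuous_pi fun n ↦ (continuous_apply (n + 1)).const_mul _

theorem continuous_adW : Continuous adW :=
  continuous_pi fun
    | 0 => continuous_const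
    | n + 1 => (continuous_apply n).const_mul _

theorem aW_adW_apply (v : ℕ → ℂ) (n : ℕ) : aW (adW v) n = (n + 1) * v n := by
  rw [aW_apply, adW_apply_succ, ← mul_assoc, ← ofReal_mul, Real.mul_self_sqrt (by positivity)]
  push_cast
  rfl

theorem adW_aW_apply (v : ℕ → ℂ) (n : ℕ) : adW (aW v) n = n * v n := by
  cases n with
  | zero => simp [adW_apply_zero]
  | succ n =>
    rw [adW_apply_succ, aW_apply, ← mul_assoc, ← ofReal_mul, Real.mul_self_sqrt (by positivity)]
    push_cast
    rfl

theorem aW_mul_adW : (aW : Module.End ℂ (ℕ → ℂ)) * adW = (adW : Module.End ℂ (ℕ → ℂ)) * aW + 1 := by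
  ext v n
  simp [aW_adW_apply, adW_aW_apply, add_mul]

theorem adW_pow_apply_eq_zero (v : ℕ → ℂ) {m n : ℕ} (hnm : n < m) :
    ((adW : Module.End ℂ (ℕ → ℂ)) ^ m) v n = 0 := by
  induction m generalizing n with
  | zero => omega
  | succ m ih =>
    rw [pow_succ', Module.End.mul_apply]
    cases n with
    | zero => exact adW_apply_zero _
    | succ n => rw [adW_apply_succ, ih (by omega), mul_zero]

theorem adW_sq_pow_apply_eq_zero (v : ℕ → ℂ) {n k : ℕ} (hnk : n < 2 * k) :
    (((adW : Module.End ℂ (ℕ → ℂ)) ^ 2) ^ k) v n = 0 := by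
  rw [← pow_mul, adW_pow_apply_eq_zero v hnk]

theorem hasSum_gaussianTerm_adW_apply (v : ℕ → ℂ) (n : ℕ) :
    HasSum (fun k ↦ gaussianTerm ℂ (adW : Module.End ℂ (ℕ → ℂ)) k v n)
      (∑ k ∈ Finset.range (n / 2 + 1), gaussianTerm ℂ (adW : Module.End ℂ (ℕ → ℂ)) k v n) := by
  refine hasSum_sum_of_ne_finset_zero fun k hk ↦ ?_
  have hnk : n < 2 * k := by
    rw [Finset.mem_range] at hk
    omega
  simp [gaussianTerm, adW_sq_pow_apply_eq_zero v hnk]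

theorem exists_isGaussianExp_adW : ∃ G : Module.End ℂ (ℕ → ℂ), IsGaussianExp adW G :=
  exists_linearMap_hasSum fun v ↦
    Pi.summable.mpr fun n ↦ (hasSum_gaussianTerm_adW_apply v n).summable

theorem IsGaussianExp.apply_eq_sum_range {G : Module.End ℂ (ℕ → ℂ)} (hG : IsGaussianExp adW G)
    (v : ℕ → ℂ) (n : ℕ) :
    G v n = ∑ k ∈ Finset.range (n / 2 + 1), ((1 : ℂ) / (2 ^ k * (k.factorial : ℂ))) *
      (((adW : Module.End ℂ (ℕ → ℂ)) ^ 2) ^ k) v n :=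
  (Pi.hasSum.mp (hG v) n).unique (hasSum_gaussianTerm_adW_apply v n)

end LadderOperators

/-- `(a†)²` raises indices by 2, so `G = Σ_k (1/(2^k k!)) ((a†)²)^k` is defined
componentwise by finite sums; it satisfies `G ∘ a† = a† ∘ G` and `G ∘ a = (a − a†) ∘ G`, hence
`G ∘ (a† + ½a) = ½(a† + a) ∘ G` and `G ∘ (−iℏa) = iℏ(a† − a) ∘ G`. -/
theorem stmt8 (ℏ : ℝ) (hℏ : ℏ ≠ 0) :
    (∀ (v : ℕ → ℂ) (n k : ℕ), n < 2 * k →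
      ((((adW : Module.End ℂ (ℕ → ℂ)) ^ 2) ^ k) v) n = 0) ∧
    ∃ G : Module.End ℂ (ℕ → ℂ),
      (∀ (v : ℕ → ℂ) (n : ℕ), (G v) n =
        ∑ k ∈ Finset.range (n / 2 + 1),
          ((1 : ℂ) / (2 ^ k * (k.factorial : ℂ))) *
            ((((adW : Module.End ℂ (ℕ → ℂ)) ^ 2) ^ k) v) n) ∧
      G * adW = adW * G ∧
      G * aW = ((aW : Module.End ℂ (ℕ → ℂ)) - adW) * G ∧
      G * ((adW : Module.End ℂ (ℕ → ℂ)) + (1 / 2 : ℂ) • (aW : Module.End ℂ (ℕ → ℂ))) =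
        ((1 / 2 : ℂ) • ((adW : Module.End ℂ (ℕ → ℂ)) + aW)) * G ∧
      G * ((-(Complex.I * ℏ)) • (aW : Module.End ℂ (ℕ → ℂ))) =
        ((Complex.I * ℏ) • ((adW : Module.End ℂ (ℕ → ℂ)) - aW)) * G := by
  obtain ⟨G, hG⟩ := exists_isGaussianExp_adW
  have G_adW : G * adW = adW * G := (hG.commute continuous_adW).eq
  have G_aW : G * aW = ((aW : Module.End ℂ (ℕ → ℂ)) - adW) * G :=
    hG.mul_eq_sub_mul continuous_aW continuous_adW aW_mul_adW
  refine ⟨fun v n k ↦ adW_sq_pow_apply_eq_zero v, G, hG.apply_eq_sum_range, G_adW, G_aW, ?_, ?_⟩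
  · rw [mul_add, mul_smul_comm, G_adW, G_aW, smul_mul_assoc, sub_mul, add_mul]
    module
  · rw [mul_smul_comm, G_aW, smul_mul_assoc, sub_mul, sub_mul]
    module

end
end

section
/- For all m, n ∈ ℕ, the standard-ordering reordering identity holds in End_ℂ(V): (a†)^n ∘ (−iħ·a)^m = Σ_{s=0}^{min(m,n)} ((iħ)^s · m!·n!/(s!·(m−s)!·(n−s)!)) · F^{(m−s,n−s)}. -/
open Complex MvPolynomial Finset

noncomputable section

/-!
Write `ad D = L_D - R_D` for left and right multiplication by `D`. As `R_D` and `ad D` commute, the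
binomial theorem expands `L_D ^ n = (ad D + R_D) ^ n`, so `D ^ n * x` is a sum of terms
`(ad D) ^ s x * D ^ (n - s)`. When `c = ⁅D, P⁆` commutes with `D` and `P`, the derivation `ad D`
acts on powers of `P` like `c * d/dP`, which evaluates these terms for `x = P ^ m`. The theorem is
the case `D = a†`, `P = -iℏa`, where `c = iℏ`.
-/

section Commutator

variable {A : Type*} [Ring A]

theorem lie_mul_eq_lie_mul_add_mul_lie (x y z : A) : ⁅x, y * z⁆ = ⁅x, y⁆ * z + y * ⁅x, z⁆ := by
  simp only [Ring.lie_def]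
  noncomm_ring

theorem lie_pow_of_commute_lie {D P : A} (hP : Commute P ⁅D, P⁆) (m : ℕ) :
    ⁅D, P ^ m⁆ = m • (⁅D, P⁆ * P ^ (m - 1)) := by
  induction m with
  | zero => simp [Ring.lie_def]
  | succ m ih =>
    have absorb : m • (⁅D, P⁆ * P ^ (m - 1) * P) = m • (⁅D, P⁆ * P ^ m) := by
      cases m with
      | zero => simp only [zero_smul]
      | succ m => rw [Nat.add_sub_cancel, mul_assoc, ← pow_succ]
    rw [pow_succ, lie_mul_eq_lie_mul_add_mul_lie, ih, smul_mul_assoc, absorb,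
      (hP.pow_left m).eq, ← succ_nsmul, Nat.add_sub_cancel]

attribute [local instance] LieRing.ofAssociativeRing

theorem pow_mul_eq_sum_ad_pow_mul_pow (R : Type*) [CommRing R] [Algebra R A] (D x : A) (n : ℕ) :
    D ^ n * x =
      ∑ s ∈ range (n + 1), n.choose s • ((LieAlgebra.ad R A D ^ s) x * D ^ (n - s)) := by
  have ad_eq : LieAlgebra.ad R A D = LinearMap.mulLeft R D - LinearMap.mulRight R D :=
    congrFun (LieAlgebra.ad_eq_lmul_left_sub_lmul_right A) D
  have left_eq : LinearMap.mulLeft R D = LieAlgebra.ad R A D + LinearMap.mulRight R D := by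
    rw [ad_eq, sub_add_cancel]
  have ad_comm_right : Commute (LieAlgebra.ad R A D) (LinearMap.mulRight R D) :=
    ad_eq ▸ (LinearMap.commute_mulLeft_right D D).sub_left (Commute.refl _)
  calc D ^ n * x = ((LieAlgebra.ad R A D + LinearMap.mulRight R D) ^ n) x := by
        rw [← left_eq, LinearMap.pow_mulLeft, LinearMap.mulLeft_apply]
    _ = ∑ s ∈ range (n + 1), n.choose s • ((LieAlgebra.ad R A D ^ s) x * D ^ (n - s)) := by
        rw [ad_comm_right.add_pow, LinearMap.sum_apply]
        refine sum_congr rfl fun s _ => ?_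
        rw [← nsmul_eq_mul', LinearMap.smul_apply, (ad_comm_right.pow_pow _ _).eq,
          Module.End.mul_apply, LinearMap.pow_mulRight, LinearMap.mulRight_apply]

theorem ad_pow_apply_pow_of_commute_lie (R : Type*) [CommRing R] [Algebra R A] {D P : A}
    (hD : Commute D ⁅D, P⁆) (hP : Commute P ⁅D, P⁆) (m s : ℕ) :
    (LieAlgebra.ad R A D ^ s) (P ^ m) = m.descFactorial s • (⁅D, P⁆ ^ s * P ^ (m - s)) := by
  induction s with
  | zero => simp
  | succ s ih =>
    have lie_lie_pow : ⁅D, ⁅D, P⁆ ^ s⁆ = 0 := (hD.pow_right s).lie_eq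
    rw [pow_succ', Module.End.mul_apply, ih, map_nsmul, LieAlgebra.ad_apply,
      lie_mul_eq_lie_mul_add_mul_lie, lie_lie_pow, zero_mul, zero_add, lie_pow_of_commute_lie hP,
      mul_smul_comm, smul_smul, ← mul_assoc, ← pow_succ, Nat.sub_sub, Nat.descFactorial_succ,
      mul_comm (m - s)]

theorem pow_mul_pow_eq_sum_of_commute_lie {D P : A}
    (hD : Commute D ⁅D, P⁆) (hP : Commute P ⁅D, P⁆) (m n : ℕ) :
    D ^ n * P ^ m = ∑ s ∈ range (min m n + 1),
      (m.descFactorial s * n.choose s) • (⁅D, P⁆ ^ s * (P ^ (m - s) * D ^ (n - s))) := by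
  have terms_above_m : ∀ s ∈ range (n + 1), s ∉ range (min m n + 1) →
      (m.descFactorial s * n.choose s) • (⁅D, P⁆ ^ s * (P ^ (m - s) * D ^ (n - s))) = 0 := by
    intro s hsn hs
    have hms : m < s := by grind
    rw [Nat.descFactorial_of_lt hms, zero_mul, zero_smul]
  rw [sum_subset (range_subset_range.2 (by omega)) terms_above_m,
    pow_mul_eq_sum_ad_pow_mul_pow ℤ]
  refine sum_congr rfl fun s _ => ?_
  rw [ad_pow_apply_pow_of_commute_lie ℤ hD hP, smul_mul_assoc, smul_smul, mul_comm (n.choose s),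
    mul_assoc]

end Commutator

theorem cast_descFactorial_mul_choose (K : Type*) [Field K] [CharZero K] {m n s : ℕ}
    (hm : s ≤ m) (hn : s ≤ n) :
    ((m.descFactorial s * n.choose s : ℕ) : K) =
      m.factorial * n.factorial / (s.factorial * (m - s).factorial * (n - s).factorial) := by
  have factorial_ne_zero (k : ℕ) : (k.factorial : K) ≠ 0 := Nat.cast_ne_zero.2 k.factorial_ne_zero
  have descFactorial_eq : (m.descFactorial s : K) = m.factorial / (m - s).factorial := by
    rw [eq_div_iff (factorial_ne_zero _), mul_comm]
    exact_mod_cast Nat.factorial_mul_descFactorial hm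
  rw [Nat.cast_mul, descFactorial_eq, Nat.cast_choose K hn, div_mul_div_comm]
  ring

theorem aop_e_zero : aop (e 0) = 0 := by
  simp [aop, e]

theorem aop_e_succ (n : ℕ) : aop (e (n + 1)) = ((√(n + 1) : ℝ) : ℂ) • e n := by
  simp [aop, e]

theorem adop_e (n : ℕ) : adop (e n) = ((√(n + 1) : ℝ) : ℂ) • e (n + 1) := by
  simp [adop, e]

theorem end_ext_e {f g : Module.End ℂ (ℕ →₀ ℂ)} (h : ∀ n, f (e n) = g (e n)) : f = g :=
  Finsupp.lhom_ext' fun n => LinearMap.ext_ring (h n)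

theorem ofReal_sqrt_succ_mul_self (n : ℕ) :
    ((√(n + 1) : ℝ) : ℂ) * ((√(n + 1) : ℝ) : ℂ) = n + 1 := by
  rw [← ofReal_mul, Real.mul_self_sqrt (by positivity), ofReal_add, ofReal_natCast, ofReal_one]

theorem aop_adop_e (n : ℕ) : aop (adop (e n)) = ((n : ℂ) + 1) • e n := by
  rw [adop_e, map_smul, aop_e_succ, smul_smul, ofReal_sqrt_succ_mul_self]

theorem adop_aop_e (n : ℕ) : adop (aop (e n)) = (n : ℂ) • e n := by
  cases n with
  | zero => simp [aop_e_zero]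
  | succ n =>
    rw [aop_e_succ, map_smul, adop_e, smul_smul, ofReal_sqrt_succ_mul_self, Nat.cast_succ]

theorem lie_aop_adop : ⁅(aop : Module.End ℂ (ℕ →₀ ℂ)), adop⁆ = 1 := by
  refine end_ext_e fun n => ?_
  rw [Ring.lie_def, LinearMap.sub_apply, Module.End.mul_apply, Module.End.mul_apply, aop_adop_e,
    adop_aop_e, ← sub_smul, add_sub_cancel_left, one_smul, Module.End.one_apply]

theorem lie_adop_smul_aop (z : ℂ) : ⁅(adop : Module.End ℂ (ℕ →₀ ℂ)), z • aop⁆ = -z • 1 := by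
  rw [← lie_aop_adop, Ring.lie_def, Ring.lie_def, mul_smul_comm, smul_mul_assoc]
  module

/-- the standard-ordering reordering identity
`(a†)^n (−iℏa)^m = Σ_{s=0}^{min(m,n)} ((iℏ)^s m!n!/(s!(m−s)!(n−s)!)) F^{(m−s,n−s)}`. -/
theorem stmt11 (ℏ : ℝ) (hℏ : ℏ ≠ 0) (m n : ℕ) :
    (adop : Module.End ℂ (ℕ →₀ ℂ)) ^ n *
        ((-(Complex.I * ℏ)) • (aop : Module.End ℂ (ℕ →₀ ℂ))) ^ m =
      ∑ s ∈ Finset.range (min m n + 1),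
        ((Complex.I * ℏ) ^ s * (m.factorial * n.factorial : ℂ) /
          (s.factorial * (m - s).factorial * (n - s).factorial)) • F ℏ (m - s) (n - s) := by
  have lie_eq : ⁅(adop : Module.End ℂ (ℕ →₀ ℂ)), (-(Complex.I * ℏ)) • aop⁆ =
      (Complex.I * ℏ) • 1 := by
    rw [lie_adop_smul_aop, neg_neg]
  have lie_central (f : Module.End ℂ (ℕ →₀ ℂ)) :
      Commute f ⁅(adop : Module.End ℂ (ℕ →₀ ℂ)), (-(Complex.I * ℏ)) • aop⁆ :=
    lie_eq ▸ (Commute.one_right f).smul_right _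
  rw [pow_mul_pow_eq_sum_of_commute_lie (lie_central _) (lie_central _)]
  refine sum_congr rfl fun s hs => ?_
  obtain ⟨hm, hn⟩ : s ≤ m ∧ s ≤ n := le_min_iff.1 (mem_range_succ_iff.1 hs)
  rw [lie_eq, smul_pow, one_pow, smul_mul_assoc, one_mul, ← Nat.cast_smul_eq_nsmul ℂ, smul_smul,
    cast_descFactorial_mul_choose ℂ hm hn, mul_comm, ← mul_div_assoc, F]

end
end
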